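/- Let n ≥ 1, let K ⊆ ℝⁿ be a proper cone, let M ∈ ℝ^{n×n} leave K invariant, and let ε > 0. Then there exists f in the interior of the dual cone K* such that the cone linear absolute norm ‖·‖_f determined by f satisfies ‖M‖_f < ρ(M) + ε, where ‖M‖_f := sup_{x ≠ 0} ‖Mx‖_f / ‖x‖_f is the induced matrix norm and ρ(M) is the spectral radius of M. -/

import Mathlib

open MeasureTheory Filter Topology
open scoped ENNReal RealInnerProductSpace

noncomputable section

/-- The space of real `n × n` matrices. -/
abbrev Mat (n : ℕ) := Matrix (Fin n) (Fin n) ℝ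

/-- Euclidean space `ℝⁿ`. -/
abbrev EucSp (n : ℕ) := EuclideanSpace ℝ (Fin n)

/-- The (Borel = product) measurable structure on `n × n` real matrices. -/
instance matMeasurableSpace (n : ℕ) : MeasurableSpace (Mat n) :=
  inferInstanceAs (MeasurableSpace (Fin n → Fin n → ℝ))

/-- Lebesgue measure on the space of `n × n` real matrices `≅ ℝ^{n²}`. -/
def matLebesgue (n : ℕ) : Measure (Mat n) :=
  (inferInstance : MeasureSpace (Fin n → Fin n → ℝ)).volume

/-- The operator norm (maximal singular value) of a real square matrix, induced by the
Euclidean norm. -/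
def opNorm {m : ℕ} (A : Matrix (Fin m) (Fin m) ℝ) : ℝ :=
  ‖LinearMap.toContinuousLinearMap (Matrix.toEuclideanLin A)‖

/-- The product `A_k ⋯ A_1` of the matrices `f 0 = A_1, …, f (k-1) = A_k` (decreasing order of
indices). -/
def prodRev {m k : ℕ} (f : Fin k → Matrix (Fin m) (Fin m) ℝ) : Matrix (Fin m) (Fin m) ℝ :=
  ((List.ofFn f).reverse).prod

/-- The joint spectral radius of a set of matrices:
`ρ̂(M) = limsup_{k→∞} sup_{A₁,…,A_k ∈ M} ‖A_k ⋯ A₁‖^(1/k)`. -/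
def jsr {m : ℕ} (M : Set (Matrix (Fin m) (Fin m) ℝ)) : ℝ :=
  limsup (fun k : ℕ =>
    sSup {x : ℝ | ∃ f : Fin k → Matrix (Fin m) (Fin m) ℝ,
      (∀ i, f i ∈ M) ∧ x = opNorm (prodRev f)} ^ ((1 : ℝ) / k)) atTop

/-- `E[‖A_k ⋯ A₁‖^p]` where `A₁, …, A_k` are i.i.d. with law `μ`. -/
def kExpNorm {m : ℕ} (μ : Measure (Mat m)) (p k : ℕ) : ℝ :=
  ∫ f : Fin k → Mat m, opNorm (prodRev f) ^ p ∂(Measure.pi fun _ => μ)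

/-- The `L^p`-norm joint spectral radius (`p`-radius) of a probability distribution `μ`:
`ρ_{p,μ} = lim_{k→∞} (E[‖A_k ⋯ A₁‖^p])^{1/(pk)}`; since this limit exists for distributions
with bounded support, it coincides with the `limsup` used here. -/
def pRadius {m : ℕ} (μ : Measure (Mat m)) (p : ℕ) : ℝ :=
  limsup (fun k : ℕ => kExpNorm μ p k ^ (1 / (p * k : ℝ))) atTop

/-- The (topological) support of a measure on matrices. -/
def msupport {m : ℕ} (μ : Measure (Mat m)) : Set (Mat m) :=
  {A | ∀ ε : ℝ, 0 < ε → μ {B | opNorm (B - A) < ε} ≠ 0}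

/-- `μ` has bounded support. -/
def HasBoundedSupport {m : ℕ} (μ : Measure (Mat m)) : Prop :=
  ∃ C : ℝ, ∀ A ∈ msupport μ, opNorm A ≤ C

/-- A proper cone of `ℝⁿ`: a closed convex pointed cone with nonempty interior. -/
structure IsProperCone {m : ℕ} (K : Set (EucSp m)) : Prop where
  isClosed : IsClosed K
  convex : Convex ℝ K
  smul_mem : ∀ c : ℝ, 0 ≤ c → ∀ x ∈ K, c • x ∈ K
  pointed : ∀ x ∈ K, -x ∈ K → x = 0
  solid : (interior K).Nonempty

/-- A matrix `A` leaves a cone `K` invariant: `A K ⊆ K`. -/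
def LeavesInv {m : ℕ} (A : Matrix (Fin m) (Fin m) ℝ) (K : Set (EucSp m)) : Prop :=
  ∀ x ∈ K, Matrix.toEuclideanLin A x ∈ K

/-- A set of matrices leaves a cone invariant if each of its members does. -/
def SetLeavesInv {m : ℕ} (S : Set (Matrix (Fin m) (Fin m) ℝ)) (K : Set (EucSp m)) : Prop :=
  ∀ A ∈ S, LeavesInv A K

/-- `π(K)`: the set of matrices leaving the cone `K` invariant. -/
def piCone {m : ℕ} (K : Set (EucSp m)) : Set (Mat m) := {A | LeavesInv A K}

/-- Distance (valued in `ℝ≥0∞`, with `d(A, ∅) = ∞`) from a matrix to a set of matrices, in the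
operator norm. -/
def edistSet {m : ℕ} (A : Mat m) (S : Set (Mat m)) : ℝ≥0∞ :=
  ⨅ B ∈ S, ENNReal.ofReal (opNorm (A - B))

/-- Hausdorff distance between two sets of matrices (operator norm, valued in `ℝ≥0∞`). -/
def hausdorffDistE {m : ℕ} (S T : Set (Mat m)) : ℝ≥0∞ :=
  max (⨆ A ∈ S, edistSet A T) (⨆ B ∈ T, edistSet B S)

/-- `S_M = {A : A − M leaves K invariant}`, i.e. `{A : A ≥^K M}`. -/
def matSSet {m : ℕ} (K : Set (EucSp m)) (M : Mat m) : Set (Mat m) :=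
  {A | LeavesInv (A - M) K}

/-- `π_r = {M ∈ π(K) : d(M, ∂π(K)) ≥ r}`. -/
def piConeR {m : ℕ} (K : Set (EucSp m)) (r : ℝ) : Set (Mat m) :=
  {M | M ∈ piCone K ∧ ENNReal.ofReal r ≤ edistSet M (frontier (piCone K))}

/-- `M_r = (π_r ∩ supp μ_c) ∪ supp μ_s`. -/
def MrSet {m : ℕ} (K : Set (EucSp m)) (μc μs : Measure (Mat m)) (r : ℝ) : Set (Mat m) :=
  (piConeR K r ∩ msupport μc) ∪ msupport μs

/-- The measure `ν` is zero or a finite linear combination (with positive coefficients) of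
Dirac measures. -/
def IsFiniteDiracComb {m : ℕ} (ν : Measure (Mat m)) : Prop :=
  ν = 0 ∨ ∃ (N : ℕ) (w : Fin N → ℝ) (Ms : Fin N → Mat m),
    (∀ i, 0 < w i) ∧ ν = ∑ i, ENNReal.ofReal (w i) • Measure.dirac (Ms i)

/-- The `p`-th Kronecker power of a square matrix (with `A^{⊗0} = 1`, `A^{⊗(p+1)} = A^{⊗p} ⊗ A`). -/
def kronPow {m : ℕ} (A : Matrix (Fin m) (Fin m) ℝ) :
    (p : ℕ) → Matrix (Fin (m ^ p)) (Fin (m ^ p)) ℝ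
  | 0 => 1
  | p + 1 =>
    Matrix.reindex (finProdFinEquiv.trans (finCongr (pow_succ m p).symm))
      (finProdFinEquiv.trans (finCongr (pow_succ m p).symm))
      (Matrix.kroneckerMap (· * ·) (kronPow A p) A)

/-- The `q`-th Kronecker power of a vector. -/
def vecKronPow {m : ℕ} (x : EucSp m) : (q : ℕ) → EucSp (m ^ q)
  | 0 => WithLp.toLp 2 fun _ => 1
  | q + 1 => WithLp.toLp 2 fun i =>
      vecKronPow x q (finProdFinEquiv.symm (finCongr (pow_succ m q) i)).1 *
        x (finProdFinEquiv.symm (finCongr (pow_succ m q) i)).2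

/-- The spectral radius of a real square matrix: the largest modulus of a complex eigenvalue. -/
def specRad {m : ℕ} (A : Matrix (Fin m) (Fin m) ℝ) : ℝ :=
  sSup ((norm : ℂ → ℝ) '' spectrum ℂ (A.map Complex.ofReal))

/-- The entrywise expectation `E[A^{⊗p}]` of the `p`-th Kronecker power under `μ`. -/
def kronExp {m : ℕ} (μ : Measure (Mat m)) (p : ℕ) :
    Matrix (Fin (m ^ p)) (Fin (m ^ p)) ℝ :=
  Matrix.of fun i j => ∫ A, kronPow A p i j ∂μ

/-- `V` is a stochastic Lyapunov function for `μ` of degree `p` with growth rate `γ`. -/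
def IsStochLyap {m : ℕ} (μ : Measure (Mat m)) (p : ℕ) (γ : ℝ) (V : EucSp m → ℝ) : Prop :=
  (∃ C₁ : ℝ, 0 < C₁ ∧ ∃ C₂ : ℝ, 0 < C₂ ∧
    ∀ x : EucSp m, C₁ * ‖x‖ ^ p ≤ V x ∧ V x ≤ C₂ * ‖x‖ ^ p) ∧
  ∀ x : EucSp m, (∫ A, V (Matrix.toEuclideanLin A x) ∂μ) ≤ γ ^ p * V x

/-- `ν` is a norm on `ℝ^m`. -/
def IsNormFn {m : ℕ} (ν : EucSp m → ℝ) : Prop :=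
  (∀ x, 0 ≤ ν x) ∧ (∀ x, ν x = 0 ↔ x = 0) ∧
  (∀ (a : ℝ) (x : EucSp m), ν (a • x) = |a| * ν x) ∧
  (∀ x y : EucSp m, ν (x + y) ≤ ν x + ν y)

/-- `ν` is cone absolute with respect to `K`:
`ν x = inf {ν (v + w) : v, w ∈ K, x = v − w}`. -/
def IsConeAbsolute {m : ℕ} (K : Set (EucSp m)) (ν : EucSp m → ℝ) : Prop :=
  ∀ x : EucSp m, ν x = sInf {r : ℝ | ∃ v ∈ K, ∃ w ∈ K, x = v - w ∧ r = ν (v + w)}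

/-- The dual cone `K* = {f : fᵀx ≥ 0 for all x ∈ K}`. -/
def dualConeSet {m : ℕ} (K : Set (EucSp m)) : Set (EucSp m) :=
  {f | ∀ x ∈ K, 0 ≤ ⟪f, x⟫}

/-- `ν` is cone linear with respect to `K`: `ν = ⟪f, ·⟫` on `K` for some `f ∈ K*`. -/
def IsConeLinear {m : ℕ} (K : Set (EucSp m)) (ν : EucSp m → ℝ) : Prop :=
  ∃ f ∈ dualConeSet K, ∀ x ∈ K, ν x = ⟪f, x⟫

/-- The matrix norm induced by a norm `ν` on `ℝ^m`. -/
def inducedNormFn {m : ℕ} (ν : EucSp m → ℝ) (A : Matrix (Fin m) (Fin m) ℝ) : ℝ :=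
  sSup {c : ℝ | ∃ x : EucSp m, x ≠ 0 ∧ c = ν (Matrix.toEuclideanLin A x) / ν x}

section PowerDecay

attribute [local instance] Matrix.linftyOpNormedRing Matrix.linftyOpNormedAlgebra

theorem spectralRadius_map_ofReal_le {m : ℕ} (A : Mat m) :
    spectralRadius ℂ (A.map Complex.ofReal) ≤ ENNReal.ofReal (specRad A) := by
  refine iSup₂_le fun z hz => ?_
  have hbdd : BddAbove ((norm : ℂ → ℝ) '' spectrum ℂ (A.map Complex.ofReal)) :=
    ((spectrum.isCompact (𝕜 := ℂ) (A.map Complex.ofReal)).image continuous_norm).bddAbove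
  rw [← ofReal_norm z |>.trans (enorm_eq_nnnorm z)]
  exact ENNReal.ofReal_le_ofReal (le_csSup hbdd ⟨z, hz, rfl⟩)

theorem specRad_nonneg {m : ℕ} (A : Mat m) : 0 ≤ specRad A :=
  Real.sSup_nonneg (by rintro _ ⟨z, -, rfl⟩; exact norm_nonneg z)

/-- Powers of a matrix, rescaled by any number exceeding its spectral radius, tend to zero. -/
theorem tendsto_smul_pow_zero_of_specRad_lt {m : ℕ} (A : Mat m) {r : ℝ} (hr : specRad A < r) :
    Tendsto (fun k : ℕ => (r⁻¹) ^ k • A ^ k) atTop (𝓝 0) := by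
  have hρ := specRad_nonneg A
  obtain ⟨s, hρs, hsr⟩ := exists_between hr
  have hs : 0 < s := hρ.trans_lt hρs
  have hr0 : 0 < r := hs.trans hsr
  set B : Matrix (Fin m) (Fin m) ℂ := A.map Complex.ofReal with hB
  have hlt : spectralRadius ℂ B < ENNReal.ofReal s :=
    (spectralRadius_map_ofReal_le A).trans_lt ((ENNReal.ofReal_lt_ofReal_iff hs).2 hρs)
  have hpow : ∀ᶠ k : ℕ in atTop, ‖B ^ k‖ ≤ s ^ k := by
    filter_upwards [(spectrum.pow_norm_pow_one_div_tendsto_nhds_spectralRadius B).eventually_lt_const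
      hlt, eventually_gt_atTop 0] with k hk hk0
    have h1 : ‖B ^ k‖ ^ (1 / k : ℝ) < s := (ENNReal.ofReal_lt_ofReal_iff hs).1 hk
    have h2 := pow_le_pow_left₀ (by positivity) h1.le k
    rwa [one_div, Real.rpow_inv_natCast_pow (norm_nonneg _) hk0.ne'] at h2
  have hentry : ∀ (k : ℕ) (i j : Fin m), ‖(A ^ k) i j‖ ≤ ‖B ^ k‖ := by
    intro k i j
    have hBk : B ^ k = (A ^ k).map Complex.ofReal :=
      (map_pow (Complex.ofRealHom.mapMatrix (m := Fin m)) A k).symm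
    have h1 : ‖(A ^ k) i j‖ = ‖(B ^ k) i j‖ := by simp [hBk]
    rw [h1, Matrix.linfty_opNorm_def, ← coe_nnnorm, NNReal.coe_le_coe]
    exact (Finset.single_le_sum (f := fun j => ‖(B ^ k) i j‖₊) (fun _ _ => zero_le)
      (Finset.mem_univ j)).trans
      (Finset.le_sup (f := fun i => ∑ j, ‖(B ^ k) i j‖₊) (Finset.mem_univ i))
  have hgeom : Tendsto (fun k : ℕ => (r⁻¹ * s) ^ k) atTop (𝓝 0) :=
    tendsto_pow_atTop_nhds_zero_of_lt_one (by positivity)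
      (by rw [inv_mul_lt_iff₀ hr0]; simpa using hsr)
  refine tendsto_pi_nhds.2 fun i => tendsto_pi_nhds.2 fun j => ?_
  refine squeeze_zero_norm' ?_ hgeom
  filter_upwards [hpow] with k hk
  rw [Matrix.smul_apply, norm_smul, mul_pow, norm_pow, Real.norm_of_nonneg (by positivity)]
  gcongr
  exact (hentry k i j).trans hk

end PowerDecay

section Dual

variable {m : ℕ} {K : Set (EucSp m)}

theorem mem_interior_dualConeSet_iff {f : EucSp m} :
    f ∈ interior (dualConeSet K) ↔ ∃ δ > 0, ∀ x ∈ K, δ * ‖x‖ ≤ ⟪f, x⟫ := by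
  rw [mem_interior_iff_mem_nhds, Metric.nhds_basis_closedBall.mem_iff]
  refine exists_congr fun δ => and_congr_right fun hδ => ⟨fun h x hx => ?_, fun h g hg x hx => ?_⟩
  · rcases eq_or_ne x 0 with rfl | hx0
    · simp
    have hx' : 0 < ‖x‖ := norm_pos_iff.2 hx0
    have hmem : f - (δ / ‖x‖) • x ∈ dualConeSet K := by
      apply h
      rw [mem_closedBall_iff_norm, sub_sub_cancel_left, norm_neg, norm_smul,
        Real.norm_of_nonneg (by positivity), div_mul_cancel₀ _ hx'.ne']
    have h0 := hmem x hx
    rw [inner_sub_left, real_inner_smul_left, real_inner_self_eq_norm_sq] at h0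
    have : δ / ‖x‖ * ‖x‖ ^ 2 = δ * ‖x‖ := by field_simp
    linarith
  · rw [mem_closedBall_iff_norm] at hg
    have h1 := h x hx
    have h2 : ⟪f - g, x⟫ ≤ δ * ‖x‖ := (real_inner_le_norm _ _).trans (by
      rw [norm_sub_rev]; gcongr)
    rw [inner_sub_left] at h2
    linarith

theorem IsProperCone.zero_mem (hK : IsProperCone K) : (0 : EucSp m) ∈ K := by
  obtain ⟨e, he⟩ := hK.solid
  simpa using hK.smul_mem 0 le_rfl e (interior_subset he)

theorem IsProperCone.add_mem (hK : IsProperCone K) {x y : EucSp m} (hx : x ∈ K) (hy : y ∈ K) :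
    x + y ∈ K := by
  have h := hK.convex hx hy (a := 1 / 2) (b := 1 / 2) (by norm_num) (by norm_num) (by norm_num)
  have h2 := hK.smul_mem 2 (by norm_num) _ h
  simpa [smul_add, smul_smul] using h2

/-- A proper cone is reproducing. -/
theorem IsProperCone.exists_sub_eq (hK : IsProperCone K) (x : EucSp m) :
    ∃ v ∈ K, ∃ w ∈ K, x = v - w := by
  obtain ⟨e, he⟩ := hK.solid
  have hcont : Tendsto (fun t : ℝ => e + t • x) (𝓝[>] 0) (𝓝 e) := by
    have : Continuous fun t : ℝ => e + t • x := by fun_prop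
    simpa using (this.tendsto 0).mono_left nhdsWithin_le_nhds
  obtain ⟨t, htK, ht⟩ := ((hcont.eventually (mem_interior_iff_mem_nhds.1 he)).and
    self_mem_nhdsWithin).exists
  have ht : 0 < t := ht
  refine ⟨t⁻¹ • (e + t • x), hK.smul_mem _ (by positivity) _ htK, t⁻¹ • e,
    hK.smul_mem _ (by positivity) _ (interior_subset he), ?_⟩
  rw [smul_add, smul_smul, inv_mul_cancel₀ ht.ne', one_smul, add_sub_cancel_left]

/-- A point on which every element of the dual cone is nonnegative belongs to the cone. -/
theorem IsProperCone.mem_of_forall_dual (hK : IsProperCone K) {x : EucSp m}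
    (hx : ∀ f ∈ dualConeSet K, 0 ≤ ⟪f, x⟫) : x ∈ K := by
  let C : ProperCone ℝ (EucSp m) :=
    { carrier := K
      add_mem' := hK.add_mem
      zero_mem' := hK.zero_mem
      smul_mem' := fun c y hy => hK.smul_mem c c.2 y hy
      isClosed' := hK.isClosed }
  by_contra hxK
  obtain ⟨y, hy, hxy⟩ := C.hyperplane_separation' (x₀ := x) hxK
  have := hx y fun z hz => by rw [real_inner_comm]; exact hy z hz
  rw [real_inner_comm] at this
  linarith

/-- The dual of a proper cone is solid. -/
theorem IsProperCone.interior_dual_nonempty (hK : IsProperCone K) :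
    (interior (dualConeSet K)).Nonempty := by
  have hconv : Convex ℝ (dualConeSet K) := by
    intro f hf g hg a b ha hb _ x hx
    rw [inner_add_left, real_inner_smul_left, real_inner_smul_left]
    have := hf x hx
    have := hg x hx
    positivity
  have h0 : (0 : EucSp m) ∈ dualConeSet K := fun x _ => by simp
  rw [hconv.interior_nonempty_iff_affineSpan_eq_top,
    AffineSubspace.affineSpan_eq_top_iff_vectorSpan_eq_top_of_nonempty ℝ _ _ ⟨0, h0⟩,
    ← Submodule.orthogonal_eq_bot_iff, Submodule.eq_bot_iff]
  intro x hx
  have hperp : ∀ f ∈ dualConeSet K, ⟪f, x⟫ = 0 := fun f hf =>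
    (Submodule.mem_orthogonal _ x).1 hx f (by simpa using vsub_mem_vectorSpan ℝ hf h0)
  exact hK.pointed x (hK.mem_of_forall_dual fun f hf => (hperp f hf).ge)
    (hK.mem_of_forall_dual fun f hf => by rw [inner_neg_right, hperp f hf, neg_zero])

end Dual

section ConeNorm

variable {m : ℕ} {K : Set (EucSp m)} {f : EucSp m}

/-- The values `⟪f, v + w⟫` over all decompositions `x = v - w` with `v, w ∈ K`. -/
def coneNormValues (K : Set (EucSp m)) (f x : EucSp m) : Set ℝ :=
  {r : ℝ | ∃ v ∈ K, ∃ w ∈ K, x = v - w ∧ r = ⟪f, v + w⟫}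

/-- The cone linear absolute norm determined by `f`. -/
def coneNorm (K : Set (EucSp m)) (f x : EucSp m) : ℝ := sInf (coneNormValues K f x)

theorem coneNormValues_nonempty (hK : IsProperCone K) (x : EucSp m) :
    (coneNormValues K f x).Nonempty :=
  let ⟨v, hv, w, hw, h⟩ := hK.exists_sub_eq x
  ⟨_, v, hv, w, hw, h, rfl⟩

theorem coneNormValues_nonneg (hK : IsProperCone K) (hf : f ∈ dualConeSet K) {x : EucSp m} {r : ℝ}
    (hr : r ∈ coneNormValues K f x) : 0 ≤ r := by
  obtain ⟨v, hv, w, hw, -, rfl⟩ := hr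
  exact hf _ (hK.add_mem hv hw)

theorem coneNorm_le (hK : IsProperCone K) (hf : f ∈ dualConeSet K) {v w : EucSp m}
    (hv : v ∈ K) (hw : w ∈ K) : coneNorm K f (v - w) ≤ ⟪f, v + w⟫ :=
  csInf_le ⟨0, fun _ => coneNormValues_nonneg hK hf⟩ ⟨v, hv, w, hw, rfl, rfl⟩

theorem le_coneNorm (hK : IsProperCone K) {x : EucSp m} {b : ℝ}
    (h : ∀ v ∈ K, ∀ w ∈ K, x = v - w → b ≤ ⟪f, v + w⟫) : b ≤ coneNorm K f x :=
  le_csInf (coneNormValues_nonempty hK x) (by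
    rintro _ ⟨v, hv, w, hw, hx, rfl⟩
    exact h v hv w hw hx)

theorem coneNorm_of_mem (hK : IsProperCone K) (hf : f ∈ dualConeSet K) {x : EucSp m}
    (hx : x ∈ K) : coneNorm K f x = ⟪f, x⟫ := by
  refine le_antisymm (by simpa using coneNorm_le hK hf hx hK.zero_mem) (le_coneNorm hK ?_)
  rintro v - w hw rfl
  have := hf w hw
  rw [inner_sub_right, inner_add_right]
  linarith

theorem coneNorm_isConeAbsolute (hK : IsProperCone K) (hf : f ∈ dualConeSet K) :
    IsConeAbsolute K (coneNorm K f) := by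
  intro x
  rw [coneNorm, coneNormValues]
  congr 1
  ext r
  refine exists_congr fun v => and_congr_right fun hv => exists_congr fun w =>
    and_congr_right fun hw => ?_
  rw [coneNorm_of_mem hK hf (hK.add_mem hv hw)]

theorem coneNorm_smul_le (hK : IsProperCone K) (hf : f ∈ dualConeSet K) (a : ℝ) (x : EucSp m) :
    coneNorm K f (a • x) ≤ |a| * coneNorm K f x := by
  rcases eq_or_ne a 0 with rfl | ha
  · simp [coneNorm_of_mem hK hf hK.zero_mem]
  rw [← div_le_iff₀' (abs_pos.2 ha)]
  refine le_coneNorm hK fun v hv w hw hx => ?_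
  rw [div_le_iff₀' (abs_pos.2 ha), ← real_inner_smul_right, smul_add, hx]
  have hv' := hK.smul_mem _ (abs_nonneg a) v hv
  have hw' := hK.smul_mem _ (abs_nonneg a) w hw
  rcases abs_choice a with h | h
  · rw [h] at hv' hw' ⊢
    rw [smul_sub]
    exact coneNorm_le hK hf hv' hw'
  · have : a • (v - w) = |a| • w - |a| • v := by rw [h]; module
    rw [this, add_comm]
    exact coneNorm_le hK hf hw' hv'

theorem coneNorm_isNormFn (hK : IsProperCone K) (hf : f ∈ interior (dualConeSet K)) :
    IsNormFn (coneNorm K f) := by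
  have hf' := interior_subset hf
  obtain ⟨δ, hδ, hfδ⟩ := mem_interior_dualConeSet_iff.1 hf
  have hlow : ∀ x, δ * ‖x‖ ≤ coneNorm K f x := by
    refine fun x => le_coneNorm hK ?_
    rintro v hv w hw rfl
    rw [inner_add_right]
    nlinarith [norm_sub_le v w, hfδ v hv, hfδ w hw]
  have hzero : coneNorm K f 0 = 0 := by simp [coneNorm_of_mem hK hf' hK.zero_mem]
  refine ⟨fun x => (by positivity : 0 ≤ δ * ‖x‖).trans (hlow x), fun x => ⟨fun hx => ?_, ?_⟩,
    fun a x => le_antisymm (coneNorm_smul_le hK hf' a x) ?_, fun x y => ?_⟩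
  · have := hlow x
    rw [hx] at this
    exact norm_le_zero_iff.1 (nonpos_of_mul_nonpos_right this hδ)
  · rintro rfl
    exact hzero
  · rcases eq_or_ne a 0 with rfl | ha
    · simp [hzero]
    have := coneNorm_smul_le hK hf' a⁻¹ (a • x)
    rwa [inv_smul_smul₀ ha, abs_inv, ← div_eq_inv_mul, le_div_iff₀' (abs_pos.2 ha)] at this
  · rw [← sub_le_iff_le_add']
    refine le_coneNorm hK fun v' hv' w' hw' hy => ?_
    rw [sub_le_iff_le_add', ← sub_le_iff_le_add]
    refine le_coneNorm hK fun v hv w hw hx => ?_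
    rw [sub_le_iff_le_add]
    have := coneNorm_le hK hf' (hK.add_mem hv hv') (hK.add_mem hw hw')
    rw [add_sub_add_comm, ← hx, ← hy] at this
    refine this.trans_eq ?_
    simp only [inner_add_right]
    ring

theorem inducedNormFn_coneNorm_le (hK : IsProperCone K) (hf : f ∈ interior (dualConeSet K))
    {A : Mat m} (hA : LeavesInv A K) {r : ℝ} (hr : 0 < r)
    (h : ∀ x ∈ K, ⟪f, Matrix.toEuclideanLin A x⟫ ≤ r * ⟪f, x⟫) :
    inducedNormFn (coneNorm K f) A ≤ r := by
  refine Real.sSup_le ?_ hr.le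
  rintro _ ⟨x, -, rfl⟩
  refine div_le_of_le_mul₀ ((coneNorm_isNormFn hK hf).1 x) hr.le ?_
  rw [← div_le_iff₀' hr]
  refine le_coneNorm hK ?_
  rintro v hv w hw rfl
  rw [div_le_iff₀' hr, map_sub]
  refine (coneNorm_le hK (interior_subset hf) (hA v hv) (hA w hw)).trans ?_
  rw [← map_add]
  exact h _ (hK.add_mem hv hw)

end ConeNorm

section Subeigenvector

variable {m : ℕ} {K : Set (EucSp m)}

theorem inner_toEuclideanLin_transpose (A : Mat m) (f x : EucSp m) :
    ⟪Matrix.toEuclideanLin A.transpose f, x⟫ = ⟪f, Matrix.toEuclideanLin A x⟫ := by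
  rw [← Matrix.conjTranspose_eq_transpose_of_trivial,
    Matrix.toEuclideanLin_conjTranspose_eq_adjoint, LinearMap.adjoint_inner_left]

theorem toEuclideanLin_mul_apply (A B : Mat m) (x : EucSp m) :
    Matrix.toEuclideanLin (A * B) x = Matrix.toEuclideanLin A (Matrix.toEuclideanLin B x) := by
  simp [Matrix.toLpLin_apply, Matrix.mulVec_mulVec]

theorem LeavesInv.smul_pow (hK : IsProperCone K) {A : Mat m} (hA : LeavesInv A K) {c : ℝ}
    (hc : 0 ≤ c) (k : ℕ) : LeavesInv (c ^ k • A ^ k) K := by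
  intro x hx
  rw [map_smul, LinearMap.smul_apply]
  refine hK.smul_mem _ (pow_nonneg hc k) _ ?_
  induction k with
  | zero => simpa [Matrix.toLpLin_apply] using hx
  | succ k ih =>
    rw [pow_succ', toEuclideanLin_mul_apply]
    exact hA _ ih

/-- For every `r > ρ(A)` the dual cone has an interior point `f` with `Aᵀ f ≤ r f` in the order of
the dual cone. -/
theorem exists_dual_subeigenvector (hK : IsProperCone K) {A : Mat m} (hA : LeavesInv A K) {r : ℝ}
    (hr : specRad A < r) :
    ∃ f ∈ interior (dualConeSet K), ∀ x ∈ K, ⟪f, Matrix.toEuclideanLin A x⟫ ≤ r * ⟪f, x⟫ := by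
  have hr0 : 0 < r := (specRad_nonneg A).trans_lt hr
  obtain ⟨g, hg⟩ := hK.interior_dual_nonempty
  obtain ⟨δ, hδ, hgδ⟩ := mem_interior_dualConeSet_iff.1 hg
  let B : ℕ → Mat m := fun k => r⁻¹ ^ k • A ^ k
  have hBinv : ∀ k, LeavesInv (B k) K := fun k => hA.smul_pow hK (by positivity) k
  have hB0 : ∀ x, Matrix.toEuclideanLin (B 0) x = x := fun x => by
    simp [B]
  have hBsucc : ∀ k x, Matrix.toEuclideanLin (B k) (Matrix.toEuclideanLin A x) =
      r • Matrix.toEuclideanLin (B (k + 1)) x := fun k x => by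
    have : r • B (k + 1) = B k * A := by
      simp only [B, smul_smul, pow_succ, smul_mul_assoc]
      congr 1
      field_simp
    rw [← LinearMap.smul_apply, ← map_smul, this, toEuclideanLin_mul_apply]
  have hlim : Tendsto (fun k => Matrix.toEuclideanLin (B k).transpose g) atTop (𝓝 0) := by
    have hcont : Continuous fun C : Mat m => Matrix.toEuclideanLin C.transpose g := by
      simp only [Matrix.toLpLin_apply]
      fun_prop
    have h0 : Matrix.toEuclideanLin (0 : Mat m).transpose g = 0 := by simp
    exact h0 ▸ (hcont.tendsto 0).comp (tendsto_smul_pow_zero_of_specRad_lt A hr)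
  obtain ⟨N, hN, hN0⟩ := ((hlim.norm.eventually_le_const (by simpa using hδ)).and
    (eventually_gt_atTop 0)).exists
  let f : EucSp m := ∑ k ∈ Finset.range N, Matrix.toEuclideanLin (B k).transpose g
  have hf : ∀ x, ⟪f, x⟫ = ∑ k ∈ Finset.range N, ⟪g, Matrix.toEuclideanLin (B k) x⟫ := fun x => by
    simp only [f, sum_inner, inner_toEuclideanLin_transpose]
  refine ⟨f, mem_interior_dualConeSet_iff.2 ⟨δ, hδ, fun x hx => (hgδ x hx).trans ?_⟩,
    fun x hx => ?_⟩
  · rw [hf]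
    have := Finset.single_le_sum (f := fun k => ⟪g, Matrix.toEuclideanLin (B k) x⟫)
      (fun k _ => interior_subset hg _ (hBinv k x hx)) (Finset.mem_range.2 hN0)
    simpa only [hB0] using this
  · have hlast : ⟪g, Matrix.toEuclideanLin (B N) x⟫ ≤ ⟪g, x⟫ := by
      rw [← inner_toEuclideanLin_transpose]
      refine (real_inner_le_norm _ _).trans (le_trans ?_ (hgδ x hx))
      gcongr
    simp only [hf, hBsucc, real_inner_smul_right, ← Finset.mul_sum]
    gcongr r * ?_
    have h1 := Finset.sum_range_succ (fun k => ⟪g, Matrix.toEuclideanLin (B k) x⟫) N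
    have h2 := Finset.sum_range_succ' (fun k => ⟪g, Matrix.toEuclideanLin (B k) x⟫) N
    rw [hB0] at h2
    linarith

end Subeigenvector

/-- If `M` leaves the proper cone `K` invariant and `ε > 0`, then there exists
`f` in the interior of the dual cone `K*` whose cone linear absolute norm `‖·‖_f` satisfies
`‖M‖_f < ρ(M) + ε` in the induced matrix norm. -/
theorem stmt18 (n : ℕ) (hn : 1 ≤ n) (K : Set (EucSp n)) (hK : IsProperCone K)
    (M : Mat n) (hM : LeavesInv M K) (ε : ℝ) (hε : 0 < ε) :
    ∃ f ∈ interior (dualConeSet K), ∃ ν : EucSp n → ℝ,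
      IsNormFn ν ∧ (∀ x ∈ K, ν x = ⟪f, x⟫) ∧ IsConeAbsolute K ν ∧
      inducedNormFn ν M < specRad M + ε := by
  obtain ⟨f, hf, hfM⟩ := exists_dual_subeigenvector hK hM
    (lt_add_of_pos_right (specRad M) (half_pos hε))
  have hr : 0 < specRad M + ε / 2 := add_pos_of_nonneg_of_pos (specRad_nonneg M) (half_pos hε)
  have hf' := interior_subset hf
  refine ⟨f, hf, coneNorm K f, coneNorm_isNormFn hK hf, fun x => coneNorm_of_mem hK hf',
    coneNorm_isConeAbsolute hK hf', ?_⟩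
  exact (inducedNormFn_coneNorm_le hK hf hM hr hfM).trans_lt (by linarith)

end
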